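/- Fix B with 1 < B < ∞ and let F₂(B) = F₂(φ) with φ(n) = B^n. Then the Hausdorff dimension of F₂(B) is at most s_B. -/

import Mathlib

/-!
Write `g(t) = 3t - 1 - t²`. It suffices to show `dimH F₂(B) ≤ t` whenever `s < t < 1` and
`P_B(s) ≤ 0`; the values `s ≥ 1` are harmless because a subset of the line has dimension at most `1`,
and `s = 1` itself satisfies `P_B(1) ≤ 0` since cylinder lengths add up to at most `1`
(`W_one_le`, `pressure_one_le`), so that the infimum defining `s_B` is over a nonempty set.

*Word sums.* Let `W t m = ∑ q_m(u)^(-2t)` over words `u` of length `m`. From `P_B(s) ≤ 0` and the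
strict monotonicity of `g` on `[0, 1]` one gets `W t m ≤ W s m ≤ K λ^m` with `λ < B^{g(t)}`.
Finiteness of `W s 1 = ∑ a^(-2s)` forces `s > 1/2`.

*Covers.* Fix `n`, put `M = B^n`, and suppose both products are at least `M`. A set of points sharing
the digits `w` and having next digit at least `R` has diameter at most `1 / (q(w)² R)`
(`dist_le_of_word`), and `q` is supermultiplicative under concatenation (`contQ_append`).
If the two pairs overlap, say `ab ≥ M` and `bc ≥ M`, there are three cases:
* `a ≤ M^(1-t)`: fix `a` and group all `b ≥ M / a`;
* `a ≥ M^(1-t)` and `b ≥ M^t`: fix `a` and group all such `b`;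
* `a ≥ M^(1-t)` and `b ≤ M^t`: fix `a, b` and group all `c ≥ M / b`.

The threshold `M^(1-t)` balances these, and each costs at most `M^(-g(t) + 2ε)` times word sums.
If the pairs are disjoint, `ab ≥ M` and `cd ≥ M`, fix `a, b` and everything up to `c`, and group
`c ≥ M^t`, or, if `c ≤ M^t`, fix `c` and group `d ≥ M / c`. The cost `M^(-(2t - 1 + t²) + 2ε)` is again
at most `M^(-g(t) + 2ε)`, because `2t - 1 + t² ≥ 3t - 1 - t²` for `t ≥ 1/2`.

*Conclusion.* Summing over the at most `n²` positions and over `n`, the contents form a convergent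
series, so by Borel–Cantelli for outer measures the limsup set `F₂(B)` has zero `t`-dimensional
Hausdorff content (`content_F2`), hence zero `t`-dimensional Hausdorff measure
(`hausdorffMeasure_eq_zero_of_content`).
-/

open scoped ENNReal
open MeasureTheory Filter

/-- The Gauss map `T(x) = 1/x - ⌊1/x⌋`. -/
noncomputable def gaussMap (x : ℝ) : ℝ := 1 / x - ⌊1 / x⌋

/-- The `n`-th partial quotient `a_n(x) = ⌊1 / T^{n-1}(x)⌋` (for `n ≥ 1`). -/
noncomputable def pq (x : ℝ) (n : ℕ) : ℕ := ⌊1 / (gaussMap^[n - 1] x)⌋₊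

/-- The set `F₂(φ)` of irrational `x ∈ (0,1)` such that for infinitely many `n` there are
`1 ≤ k ≠ l ≤ n` with `a_k a_{k+1} ≥ φ(n)` and `a_l a_{l+1} ≥ φ(n)`. -/
def F2 (φ : ℕ → ℝ) : Set ℝ :=
  {x | x ∈ Set.Ioo (0 : ℝ) 1 ∧ Irrational x ∧
    {n : ℕ | ∃ k l : ℕ, 1 ≤ k ∧ k ≤ n ∧ 1 ≤ l ∧ l ≤ n ∧ k ≠ l ∧
      φ n ≤ (pq x k : ℝ) * (pq x (k + 1) : ℝ) ∧
      φ n ≤ (pq x l : ℝ) * (pq x (l + 1) : ℝ)}.Infinite}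

/-- The continuant `q_n(a_1,…,a_n)` of a word, via `q_{-1} = 0`, `q_0 = 1`,
`q_n = a_n q_{n-1} + q_{n-2}` (the pair holds `(q_{k}, q_{k-1})`). -/
def contQ (l : List ℕ) : ℕ :=
  (l.foldl (fun p a => (a * p.1 + p.2, p.1)) ((1 : ℕ), (0 : ℕ))).1

/-- `Σ_{(a_1,…,a_n) ∈ ℕⁿ} B^{-n(3s-1-s²)} q_n(a_1,…,a_n)^{-2s}` as an extended nonnegative
real number. -/
noncomputable def presSum (B s : ℝ) (n : ℕ) : ℝ≥0∞ :=
  ∑' v : Fin n → ℕ+,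
    ENNReal.ofReal (B ^ (-(n : ℝ) * (3 * s - 1 - s ^ 2)) *
      (contQ (List.ofFn fun i => ((v i : ℕ))) : ℝ) ^ (-(2 * s)))

/-- The pressure function `P_B(s) = lim_n (1/n) log presSum B s n ∈ (-∞,∞]`
(the limit exists, hence equals the `limsup`). -/
noncomputable def pressure (B s : ℝ) : EReal :=
  Filter.atTop.limsup fun n : ℕ => (((n : ℝ)⁻¹ : ℝ) : EReal) * ENNReal.log (presSum B s n)

/-- `s_B = inf {s ≥ 0 : P_B(s) ≤ 0}`. -/
noncomputable def sB (B : ℝ) : ℝ := sInf {s : ℝ | 0 ≤ s ∧ pressure B s ≤ 0}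

/-! ### Continuants -/

/-- The pair `(q_n, q_{n-1})` of consecutive continuants of a word. -/
def cq (l : List ℕ) : ℕ × ℕ := l.foldl (fun p a => (a * p.1 + p.2, p.1)) (1, 0)

/-- The pair `(p_n, p_{n-1})` of consecutive numerators of the convergents of a word. -/
def cp (l : List ℕ) : ℕ × ℕ := l.foldl (fun p a => (a * p.1 + p.2, p.1)) (0, 1)

lemma contQ_eq (l : List ℕ) : contQ l = (cq l).1 := rfl

lemma cq_snoc (l : List ℕ) (a : ℕ) :
    cq (l ++ [a]) = (a * (cq l).1 + (cq l).2, (cq l).1) := by simp [cq]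

lemma cp_snoc (l : List ℕ) (a : ℕ) :
    cp (l ++ [a]) = (a * (cp l).1 + (cp l).2, (cp l).1) := by simp [cp]

lemma cq_bounds (l : List ℕ) (h : ∀ a ∈ l, 1 ≤ a) : 1 ≤ (cq l).1 ∧ (cq l).2 ≤ (cq l).1 := by
  induction l using List.reverseRecOn with
  | nil => simp [cq]
  | append_singleton l a ih =>
    have ih := ih fun b hb => h b (by simp [hb])
    have ha : 1 ≤ a := h a (by simp)
    rw [cq_snoc]
    have : (cq l).1 ≤ a * (cq l).1 := Nat.le_mul_of_pos_left _ ha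
    simp only
    omega

lemma contQ_pos (l : List ℕ) (h : ∀ a ∈ l, 1 ≤ a) : 1 ≤ contQ l := (cq_bounds l h).1

lemma foldl_step_ge (x : ℕ) (l : List ℕ) (p r : ℕ × ℕ) (h1 : x * r.1 ≤ p.1) (h2 : x * r.2 ≤ p.2) :
    x * (l.foldl (fun p a => (a * p.1 + p.2, p.1)) r).1 ≤
      (l.foldl (fun p a => (a * p.1 + p.2, p.1)) p).1 := by
  induction l generalizing p r with
  | nil => simpa using h1
  | cons a l ih =>
    simp only [List.foldl_cons]
    refine ih _ _ ?_ h1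
    simp only
    nlinarith [Nat.mul_le_mul_left a h1]

/-- Continuants are supermultiplicative under concatenation. -/
lemma contQ_append (l m : List ℕ) : contQ l * contQ m ≤ contQ (l ++ m) := by
  unfold contQ
  rw [List.foldl_append]
  exact foldl_step_ge _ m _ _ (by simp) (by simp)

lemma contQ_singleton (a : ℕ) : contQ [a] = a := by simp [contQ]

lemma contQ_snoc_one (l : List ℕ) (h : ∀ a ∈ l, 1 ≤ a) : contQ (l ++ [1]) ≤ 2 * contQ l := by
  have := cq_bounds l h
  rw [contQ_eq, contQ_eq, cq_snoc]
  simp only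
  omega

lemma cq_det (l : List ℕ) :
    ((cp l).1 * (cq l).2 - (cp l).2 * (cq l).1 : ℝ) ^ 2 = 1 := by
  induction l using List.reverseRecOn with
  | nil => simp [cp, cq]
  | append_singleton l a ih =>
    rw [cq_snoc, cp_snoc, ← ih]
    push_cast
    ring

/-! ### Digits and cylinders -/

/-- The irrational points of the unit interval. -/
def good : Set ℝ := {x | x ∈ Set.Ioo (0 : ℝ) 1 ∧ Irrational x}

/-- The first `m` partial quotients of `x`. -/
noncomputable def word (x : ℝ) (m : ℕ) : List ℕ := (List.range m).map fun j => pq x (j + 1)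

lemma gaussMap_good {x : ℝ} (hx : x ∈ good) : gaussMap x ∈ good := by
  obtain ⟨_, hi⟩ := hx
  have h1 : Irrational (1 / x) := by simpa using hi
  have h2 : Irrational (gaussMap x) := by
    unfold gaussMap
    exact h1.sub_intCast _
  refine ⟨⟨?_, ?_⟩, h2⟩
  · have : 0 ≤ gaussMap x := Int.fract_nonneg (1 / x)
    exact lt_of_le_of_ne this (fun h => h2.ne_zero h.symm)
  · exact Int.fract_lt_one (1 / x)

lemma iterate_good {x : ℝ} (hx : x ∈ good) (m : ℕ) : gaussMap^[m] x ∈ good := by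
  induction m with
  | zero => exact hx
  | succ m ih => rw [Function.iterate_succ_apply']; exact gaussMap_good ih

lemma pq_pos {x : ℝ} (hx : x ∈ good) (j : ℕ) : 1 ≤ pq x (j + 1) := by
  have h := (iterate_good hx j).1
  unfold pq
  rw [Nat.le_floor_iff' one_ne_zero, Nat.add_sub_cancel, Nat.cast_one]
  exact (one_le_div h.1).2 h.2.le

lemma word_pos {x : ℝ} (hx : x ∈ good) (m : ℕ) : ∀ a ∈ word x m, 1 ≤ a := by
  intro a ha
  simp only [word, List.mem_map] at ha
  obtain ⟨j, _, rfl⟩ := ha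
  exact pq_pos hx j

lemma word_succ (x : ℝ) (m : ℕ) : word x (m + 1) = word x m ++ [pq x (m + 1)] := by
  simp [word, List.range_succ]

/-- One step of the algorithm: `1 / T^m x = a_{m+1} + T^{m+1} x`. -/
lemma gauss_step {x : ℝ} (hx : x ∈ good) (m : ℕ) :
    1 = (gaussMap^[m] x) * (pq x (m + 1) + gaussMap^[m + 1] x) := by
  have h := (iterate_good hx m).1
  rw [Function.iterate_succ_apply']
  unfold pq
  rw [Nat.add_sub_cancel]
  set y := gaussMap^[m] x
  have h0 : (0 : ℝ) ≤ 1 / y := by have := h.1; positivity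
  have hf : ((⌊1 / y⌋₊ : ℕ) : ℝ) = (⌊1 / y⌋ : ℝ) := natCast_floor_eq_intCast_floor h0
  rw [hf]
  unfold gaussMap
  have := h.1.ne'
  field_simp
  ring

/-- `x` is the image of `T^m x` under the Möbius map attached to its first `m` digits. -/
lemma moebius {x : ℝ} (hx : x ∈ good) (m : ℕ) :
    x * ((cq (word x m)).1 + (cq (word x m)).2 * gaussMap^[m] x) =
      (cp (word x m)).1 + (cp (word x m)).2 * gaussMap^[m] x := by
  induction m with
  | zero => simp [word, cq, cp]
  | succ m ih =>
    rw [word_succ, cq_snoc, cp_snoc]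
    push_cast
    have hs := gauss_step hx m
    set y := gaussMap^[m] x
    set z := gaussMap^[m + 1] x
    set a : ℝ := ((pq x (m + 1) : ℕ) : ℝ)
    have hy : y ≠ 0 := (iterate_good hx m).1.1.ne'
    apply mul_left_cancel₀ hy
    linear_combination ih + (x * (cq (word x m)).1 - (cp (word x m)).1) * (-hs)

/-- Two points sharing the `m` digits `w` with `a_{m+1} ≥ R` are `1 / (q(w)² R)`-close. -/
lemma dist_le_of_word {x x' R : ℝ} (hx : x ∈ good) (hx' : x' ∈ good) (hR : 0 < R) {m : ℕ}
    {w : List ℕ} (hw : word x m = w) (hw' : word x' m = w)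
    (h : R ≤ pq x (m + 1)) (h' : R ≤ pq x' (m + 1)) :
    |x - x'| ≤ 1 / ((contQ w : ℝ) ^ 2 * R) := by
  have key : ∀ z ∈ good, R ≤ pq z (m + 1) → 0 < gaussMap^[m] z ∧ gaussMap^[m] z ≤ 1 / R := by
    intro z hz hzR
    have h0 := (iterate_good hz m).1.1
    have h1 := (iterate_good hz (m + 1)).1.1
    have hs := gauss_step hz m
    refine ⟨h0, ?_⟩
    rw [le_div_iff₀ hR]
    nlinarith
  obtain ⟨y0, y1⟩ := key x hx h
  obtain ⟨y0', y1'⟩ := key x' hx' h'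
  have e := moebius hx m
  have e' := moebius hx' m
  have hpos := contQ_pos w (hw ▸ word_pos hx m)
  rw [hw] at e
  rw [hw'] at e'
  rw [contQ_eq] at hpos ⊢
  have hd := cq_det w
  set y := gaussMap^[m] x
  set y' := gaussMap^[m] x'
  have hq : (1 : ℝ) ≤ ((cq w).1 : ℝ) := by exact_mod_cast hpos
  have hq' : (0 : ℝ) ≤ ((cq w).2 : ℝ) := by positivity
  set q : ℝ := ((cq w).1 : ℝ)
  set q' : ℝ := ((cq w).2 : ℝ)
  set p : ℝ := ((cp w).1 : ℝ)
  set p' : ℝ := ((cp w).2 : ℝ)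
  have hD : q ≤ q + q' * y := by nlinarith [mul_nonneg hq' y0.le]
  have hD' : q ≤ q + q' * y' := by nlinarith [mul_nonneg hq' y0'.le]
  have hx1 : (x - x') * ((q + q' * y) * (q + q' * y')) = (p' * q - p * q') * (y - y') := by
    linear_combination (q + q' * y') * e - (q + q' * y) * e'
  have habs : |p' * q - p * q'| = 1 := by
    rw [← sq_eq_sq₀ (abs_nonneg _) zero_le_one, sq_abs, one_pow, ← hd]
    ring
  have hx2 : |x - x'| * ((q + q' * y) * (q + q' * y')) = |y - y'| := by
    have := congrArg abs hx1
    rw [abs_mul, abs_mul (p' * q - p * q'), habs, one_mul] at this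
    rwa [abs_of_nonneg (a := (q + q' * y) * (q + q' * y')) (by positivity)] at this
  have hyy : |y - y'| ≤ 1 / R := by rw [abs_le]; constructor <;> linarith
  have hqq : q ^ 2 ≤ (q + q' * y) * (q + q' * y') := by
    rw [sq]; exact mul_le_mul hD hD' (by linarith) (by linarith)
  have : |x - x'| * q ^ 2 ≤ 1 / R := by
    calc _ ≤ |x - x'| * ((q + q' * y) * (q + q' * y')) :=
          mul_le_mul_of_nonneg_left hqq (abs_nonneg _)
      _ ≤ _ := hx2 ▸ hyy
  rw [← div_div, div_right_comm, le_div_iff₀ (by positivity)]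
  exact this

/-! ### Hausdorff content -/

/-- The `t`-dimensional Hausdorff content: the infimum of `∑ diam(Uᵢ)^t` over all countable covers,
with no bound on the diameters. -/
noncomputable def content (t : ℝ) (ht : 0 < t) : OuterMeasure ℝ :=
  OuterMeasure.ofFunction (fun s => Metric.ediam s ^ t) (by simp [ht])

/-- Cheap covers automatically consist of small sets, so null content means null measure. -/
lemma hausdorffMeasure_eq_zero_of_content {t : ℝ} (ht : 0 < t) {S : Set ℝ}
    (h : content t ht S = 0) : μH[t] S = 0 := by
  have hc : ∀ n : ℕ, ∃ f : ℕ → Set ℝ, S ⊆ ⋃ i, f i ∧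
      ∑' i, Metric.ediam (f i) ^ t < ((n : ℝ≥0∞) + 1)⁻¹ := by
    intro n
    have hlt : content t ht S < ((n : ℝ≥0∞) + 1)⁻¹ := by
      rw [h]
      exact ENNReal.inv_pos.2 (by finiteness)
    unfold content at hlt
    rw [OuterMeasure.ofFunction_apply] at hlt
    simp only [iInf_lt_iff] at hlt
    obtain ⟨f, hf, h2⟩ := hlt
    exact ⟨f, hf, h2⟩
  choose f hf hlt using hc
  have hlim : Tendsto (fun n : ℕ => ((n : ℝ≥0∞) + 1)⁻¹) atTop (nhds 0) := by
    have := (tendsto_add_atTop_iff_nat 1).2 ENNReal.tendsto_inv_nat_nhds_zero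
    simpa using this
  have hr : Tendsto (fun n : ℕ => (((n : ℝ≥0∞) + 1)⁻¹) ^ t⁻¹) atTop (nhds 0) := by
    have := (ENNReal.continuous_rpow_const (y := t⁻¹)).tendsto 0
    rw [ENNReal.zero_rpow_of_pos (by positivity)] at this
    exact this.comp hlim
  have key := Measure.hausdorffMeasure_le_liminf_tsum t S _ hr f
    (Eventually.of_forall fun n i => by
      have : Metric.ediam (f n i) ^ t ≤ ((n : ℝ≥0∞) + 1)⁻¹ := (ENNReal.le_tsum i).trans (hlt n).le
      exact (ENNReal.le_rpow_inv_iff ht).2 this)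
    (Eventually.of_forall hf)
  refine le_antisymm (key.trans ?_) (zero_le)
  rw [← hlim.liminf_eq]
  exact liminf_le_liminf (Eventually.of_forall fun n => (hlt n).le)

/-- Subadditivity over the fibres of a coding map `f` with countably many values. -/
lemma content_le_tsum {t : ℝ} (ht : 0 < t) {ι : Type*} [Countable ι] (f : ℝ → ι) (S : Set ℝ)
    (D : ℝ≥0∞) (wt : ι → ℝ≥0∞) (h : ∀ j, content t ht {x | x ∈ S ∧ f x = j} ≤ D * wt j) :
    content t ht S ≤ D * ∑' j, wt j := by
  have hS : S ⊆ ⋃ j, {x | x ∈ S ∧ f x = j} := by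
    intro x hx
    simp only [Set.mem_iUnion]
    exact ⟨f x, hx, rfl⟩
  calc content t ht S ≤ content t ht (⋃ j, {x | x ∈ S ∧ f x = j}) := measure_mono hS
    _ ≤ ∑' j, content t ht {x | x ∈ S ∧ f x = j} := measure_iUnion_le _
    _ ≤ ∑' j, D * wt j := ENNReal.tsum_le_tsum h
    _ = _ := ENNReal.tsum_mul_left

/-- Points sharing the first `m` digits `w`, with next digit at least `R`, form one set of the cover,
costing `q(w)^(-2t) R^(-t)`. -/
lemma content_cyl {t : ℝ} (ht : 0 < t) {S : Set ℝ} {R : ℝ} (hR : 0 < R) {m : ℕ} {w : List ℕ}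
    (h : ∀ x ∈ S, x ∈ good ∧ word x m = w ∧ R ≤ pq x (m + 1)) :
    content t ht S ≤ ENNReal.ofReal ((contQ w : ℝ) ^ (-(2 * t)) * R ^ (-t)) := by
  rcases S.eq_empty_or_nonempty with rfl | ⟨x₀, h₀⟩
  · simp
  have hq : 0 < (contQ w : ℝ) := by
    have := contQ_pos w ((h x₀ h₀).2.1 ▸ word_pos (h x₀ h₀).1 m)
    exact_mod_cast this
  refine (OuterMeasure.ofFunction_le S).trans ?_
  have hd : Metric.ediam S ≤ ENNReal.ofReal (1 / ((contQ w : ℝ) ^ 2 * R)) := by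
    refine Metric.ediam_le fun x hx y hy => ?_
    rw [edist_dist]
    apply ENNReal.ofReal_le_ofReal
    obtain ⟨a, b, c⟩ := h x hx
    obtain ⟨a', b', c'⟩ := h y hy
    exact dist_le_of_word a a' hR b b' c c'
  refine (ENNReal.rpow_le_rpow hd ht.le).trans ?_
  rw [ENNReal.ofReal_rpow_of_nonneg (by positivity) ht.le]
  apply ENNReal.ofReal_le_ofReal
  rw [one_div, Real.inv_rpow (by positivity), Real.mul_rpow (by positivity) hR.le, mul_inv,
    ← Real.rpow_neg hR.le, ← Real.rpow_natCast, ← Real.rpow_mul hq.le, ← Real.rpow_neg hq.le]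
  norm_num

/-! ### Sums over words -/

/-- The word over `ℕ` underlying a tuple of positive integers. -/
def wd {m : ℕ} (u : Fin m → ℕ+) : List ℕ := List.ofFn fun i => (u i : ℕ)

/-- `∑ q_m(u)^{-2t}` over all words `u` of length `m`. -/
noncomputable def W (t : ℝ) (m : ℕ) : ℝ≥0∞ :=
  ∑' u : Fin m → ℕ+, ENNReal.ofReal ((contQ (wd u) : ℝ) ^ (-(2 * t)))

/-- `∑ a^{-1-ε}` over positive integers. -/
noncomputable def Z (ε : ℝ) : ℝ≥0∞ := ∑' a : ℕ+, ENNReal.ofReal (((a : ℕ) : ℝ) ^ (-1 - ε))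

lemma wd_pos {m : ℕ} (u : Fin m → ℕ+) : ∀ a ∈ wd u, 1 ≤ a := by
  intro a ha
  simp only [wd, List.mem_ofFn] at ha
  obtain ⟨i, rfl⟩ := ha
  exact (u i).pos

/-- The block of digits `a_{i+1}, …, a_{i+m}` as positive integers. -/
noncomputable def vec (x : ℝ) (i m : ℕ) : Fin m → ℕ+ := fun j => (pq x (i + j + 1)).toPNat'

/-- The digit `a_{i+1}` as a positive integer. -/
noncomputable def dig (x : ℝ) (i : ℕ) : ℕ+ := (pq x (i + 1)).toPNat'

lemma dig_coe {x : ℝ} (hx : x ∈ good) (i : ℕ) : (dig x i : ℕ) = pq x (i + 1) := by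
  have := pq_pos hx i
  simp [dig, Nat.toPNat'_coe, show 0 < pq x (i + 1) from this]

lemma word_add {x : ℝ} (hx : x ∈ good) (i m : ℕ) :
    word x (i + m) = word x i ++ wd (vec x i m) := by
  induction m with
  | zero => simp [wd]
  | succ m ih =>
    rw [← add_assoc, word_succ, ih, List.append_assoc]
    congr 1
    unfold wd
    rw [List.ofFn_succ', List.concat_eq_append]
    congr 2
    exact (dig_coe hx (i + m)).symm

lemma word_eq {x : ℝ} (hx : x ∈ good) (m : ℕ) : word x m = wd (vec x 0 m) := by
  have := word_add hx 0 m
  simpa [word] using this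

lemma tsum_prod_mul {α β : Type*} (f : α → ℝ≥0∞) (g : β → ℝ≥0∞) :
    ∑' p : α × β, f p.1 * g p.2 = (∑' a, f a) * ∑' b, g b := by
  rw [ENNReal.tsum_prod (f := fun a b => f a * g b)]
  simp only [ENNReal.tsum_mul_left, ENNReal.tsum_mul_right]

lemma Z_ne_top {ε : ℝ} (hε : 0 < ε) : Z ε ≠ ⊤ := by
  have h : Summable fun a : ℕ+ => ((a : ℕ) : ℝ) ^ (-1 - ε) :=
    (Real.summable_nat_rpow.2 (by linarith)).comp_injective PNat.coe_injective
  unfold Z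
  exact h.tsum_ofReal_ne_top

lemma rpow_append (t : ℝ) (ht : 0 < t) (l m : List ℕ) (hl : ∀ a ∈ l, 1 ≤ a)
    (hm : ∀ a ∈ m, 1 ≤ a) :
    (contQ (l ++ m) : ℝ) ^ (-(2 * t)) ≤
      (contQ l : ℝ) ^ (-(2 * t)) * (contQ m : ℝ) ^ (-(2 * t)) := by
  have h1 : (0 : ℝ) < contQ l := by exact_mod_cast contQ_pos l hl
  have h2 : (0 : ℝ) < contQ m := by exact_mod_cast contQ_pos m hm
  rw [← Real.mul_rpow h1.le h2.le]
  refine Real.rpow_le_rpow_of_nonpos (by positivity) ?_ (by linarith)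
  exact_mod_cast contQ_append l m

lemma rpow_append_singleton (t : ℝ) (ht : 0 < t) (l : List ℕ) (a : ℕ) (hl : ∀ a ∈ l, 1 ≤ a)
    (ha : 1 ≤ a) :
    (contQ (l ++ [a]) : ℝ) ^ (-(2 * t)) ≤ (contQ l : ℝ) ^ (-(2 * t)) * (a : ℝ) ^ (-(2 * t)) := by
  have := rpow_append t ht l [a] hl (by simpa using ha)
  rwa [contQ_singleton] at this

/-! ### Trading a size constraint on a digit for a convergent sum

A sum of `a ^ (-t)` over `a ≤ X`, or of `a ^ (-2t)` over `a ≥ X`, is estimated termwise by a power of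
`X` times the summable `a ^ (-1-ε)`. -/

lemma small_digit {a X t ε : ℝ} (ha : 1 ≤ a) (hX : a ≤ X) (h : 0 ≤ 1 - t + ε) :
    a ^ (-t) ≤ X ^ (1 - t + ε) * a ^ (-1 - ε) := by
  have h0 : 0 < a := by linarith
  calc a ^ (-t) = a ^ (1 - t + ε) * a ^ (-1 - ε) := by
        rw [← Real.rpow_add h0]; congr 1; ring
    _ ≤ _ := by
        apply mul_le_mul_of_nonneg_right _ (by positivity)
        exact Real.rpow_le_rpow h0.le hX h

lemma large_digit {a X t ε : ℝ} (hX : 0 < X) (ha : X ≤ a) (h : 0 ≤ 2 * t - 1 - ε) :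
    a ^ (-(2 * t)) ≤ X ^ (-(2 * t - 1 - ε)) * a ^ (-1 - ε) := by
  have h0 : 0 < a := by linarith
  calc a ^ (-(2 * t)) = a ^ (-(2 * t - 1 - ε)) * a ^ (-1 - ε) := by
        rw [← Real.rpow_add h0]; congr 1; ring
    _ ≤ _ := by
        apply mul_le_mul_of_nonneg_right _ (by positivity)
        exact Real.rpow_le_rpow_of_nonpos hX ha (by linarith)

/-! ### The five covering families

For overlapping pairs, `a, b, c` are the digits `a_{i+1}, a_{i+2}, a_{i+3}` and the conditions are
`ab ≥ M`, `bc ≥ M`. For disjoint pairs, `a, b` are `a_{i+1}, a_{i+2}` and `c, d` are `a_{i+m+3}`,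
`a_{i+m+4}`, with `ab ≥ M`, `cd ≥ M`. -/

/-- Overlapping pairs, `a` small: keep `a` and group all `b ≥ M / a`. -/
lemma cover_A1 {t ε M : ℝ} (ht : 1 / 2 < t) (ht1 : t < 1) (hε : 0 < ε)
    (hM : 1 ≤ M) (i : ℕ) :
    content t (one_half_pos.trans ht) {x | x ∈ good ∧ M ≤ (pq x (i + 1) : ℝ) * pq x (i + 2) ∧
      (pq x (i + 1) : ℝ) ≤ M ^ (1 - t)} ≤
    ENNReal.ofReal (M ^ (-(3 * t - 1 - t ^ 2) + 2 * ε)) * (W t i * Z ε) := by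
  have ht0 : 0 < t := one_half_pos.trans ht
  have hM0 : 0 < M := by linarith
  rw [W, Z, ← tsum_prod_mul]
  refine content_le_tsum ht0 (fun x => (vec x 0 i, dig x i)) _ _ _ ?_
  rintro ⟨u, a⟩
  rcases Set.eq_empty_or_nonempty {x | x ∈ {x | x ∈ good ∧
      M ≤ (pq x (i + 1) : ℝ) * pq x (i + 2) ∧ (pq x (i + 1) : ℝ) ≤ M ^ (1 - t)} ∧
      (vec x 0 i, dig x i) = (u, a)} with h | ⟨x₀, ⟨hg, _, hs⟩, hx₀⟩
  · rw [h]; simp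
  simp only [Prod.mk.injEq] at hx₀
  rw [← dig_coe hg, hx₀.2] at hs
  have ha1 : (1 : ℝ) ≤ (a : ℕ) := by exact_mod_cast a.pos
  have ha0 : (0 : ℝ) < (a : ℕ) := by linarith
  refine (content_cyl ht0 (R := M / (a : ℕ)) (m := i + 1) (w := wd u ++ [(a : ℕ)])
    (by positivity) ?_).trans ?_
  · rintro x ⟨⟨hg, hab, _⟩, hx⟩
    simp only [Prod.mk.injEq] at hx
    have hd := dig_coe hg i
    rw [hx.2] at hd
    refine ⟨hg, ?_, ?_⟩
    · rw [word_succ, word_eq hg, hx.1, hd]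
    · rw [div_le_iff₀ ha0, mul_comm, hd]; exact hab
  · rw [← ENNReal.ofReal_mul (by positivity), ← ENNReal.ofReal_mul (by positivity)]
    apply ENNReal.ofReal_le_ofReal
    have h1 := rpow_append_singleton t ht0 (wd u) a (wd_pos u) a.pos
    have h2 := small_digit (t := t) (ε := ε) ha1 hs (by linarith)
    rw [Real.div_rpow hM0.le ha0.le]
    set Q := (contQ (wd u) : ℝ) ^ (-(2 * t))
    have hQ : 0 ≤ Q := by positivity
    calc _ ≤ Q * ((a : ℕ) : ℝ) ^ (-(2 * t)) * (M ^ (-t) / ((a : ℕ) : ℝ) ^ (-t)) := by gcongr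
      _ = Q * M ^ (-t) * ((a : ℕ) : ℝ) ^ (-t) := by
          rw [show -(2 * t) = -t + -t by ring, Real.rpow_add ha0]
          field_simp
      _ ≤ Q * M ^ (-t) * ((M ^ (1 - t)) ^ (1 - t + ε) * ((a : ℕ) : ℝ) ^ (-1 - ε)) := by gcongr
      _ = M ^ (-t + (1 - t) * (1 - t + ε)) * (Q * ((a : ℕ) : ℝ) ^ (-1 - ε)) := by
          rw [Real.rpow_add hM0, Real.rpow_mul hM0.le]; ring
      _ ≤ _ := mul_le_mul_of_nonneg_right
          (Real.rpow_le_rpow_of_exponent_le hM (by nlinarith)) (by positivity)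

/-- Overlapping pairs, `a` and `b` both large: keep `a` and group all `b ≥ M ^ t`. -/
lemma cover_A2 {t ε M : ℝ} (ht : 1 / 2 < t) (ht1 : t < 1) (hε : 0 < ε) (hε1 : ε ≤ 2 * t - 1)
    (hM : 1 ≤ M) (i : ℕ) :
    content t (one_half_pos.trans ht) {x | x ∈ good ∧ M ^ (1 - t) ≤ (pq x (i + 1) : ℝ) ∧
      M ^ t ≤ (pq x (i + 2) : ℝ)} ≤
    ENNReal.ofReal (M ^ (-(3 * t - 1 - t ^ 2) + 2 * ε)) * (W t i * Z ε) := by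
  have ht0 : 0 < t := one_half_pos.trans ht
  have hM0 : 0 < M := by linarith
  rw [W, Z, ← tsum_prod_mul]
  refine content_le_tsum ht0 (fun x => (vec x 0 i, dig x i)) _ _ _ ?_
  rintro ⟨u, a⟩
  rcases Set.eq_empty_or_nonempty {x | x ∈ {x | x ∈ good ∧ M ^ (1 - t) ≤ (pq x (i + 1) : ℝ) ∧
      M ^ t ≤ (pq x (i + 2) : ℝ)} ∧
      (vec x 0 i, dig x i) = (u, a)} with h | ⟨x₀, ⟨hg, hs, _⟩, hx₀⟩
  · rw [h]; simp
  simp only [Prod.mk.injEq] at hx₀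
  rw [← dig_coe hg, hx₀.2] at hs
  have ha1 : (1 : ℝ) ≤ (a : ℕ) := by exact_mod_cast a.pos
  have ha0 : (0 : ℝ) < (a : ℕ) := by linarith
  refine (content_cyl ht0 (R := M ^ t) (m := i + 1) (w := wd u ++ [(a : ℕ)])
    (by positivity) ?_).trans ?_
  · rintro x ⟨⟨hg, _, hb⟩, hx⟩
    simp only [Prod.mk.injEq] at hx
    have hd := dig_coe hg i
    rw [hx.2] at hd
    refine ⟨hg, ?_, hb⟩
    rw [word_succ, word_eq hg, hx.1, hd]
  · rw [← ENNReal.ofReal_mul (by positivity), ← ENNReal.ofReal_mul (by positivity)]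
    apply ENNReal.ofReal_le_ofReal
    have h1 := rpow_append_singleton t ht0 (wd u) a (wd_pos u) a.pos
    have h2 := large_digit (t := t) (ε := ε) (by positivity) hs (by linarith)
    set Q := (contQ (wd u) : ℝ) ^ (-(2 * t))
    have hQ : 0 ≤ Q := by positivity
    calc _ ≤ Q * ((a : ℕ) : ℝ) ^ (-(2 * t)) * (M ^ t) ^ (-t) := by gcongr
      _ ≤ Q * ((M ^ (1 - t)) ^ (-(2 * t - 1 - ε)) * ((a : ℕ) : ℝ) ^ (-1 - ε)) * (M ^ t) ^ (-t) := by
          gcongr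
      _ = M ^ ((1 - t) * (-(2 * t - 1 - ε)) + t * (-t)) * (Q * ((a : ℕ) : ℝ) ^ (-1 - ε)) := by
          rw [Real.rpow_add hM0, Real.rpow_mul hM0.le, Real.rpow_mul hM0.le]; ring
      _ ≤ _ := mul_le_mul_of_nonneg_right
          (Real.rpow_le_rpow_of_exponent_le hM (by nlinarith)) (by positivity)

/-- Overlapping pairs, `a` large and `b` small: keep `a`, `b` and group all `c ≥ M / b`. -/
lemma cover_A3 {t ε M : ℝ} (ht : 1 / 2 < t) (ht1 : t < 1) (hε : 0 < ε) (hε1 : ε ≤ 2 * t - 1)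
    (hM : 1 ≤ M) (i : ℕ) :
    content t (one_half_pos.trans ht) {x | x ∈ good ∧ M ^ (1 - t) ≤ (pq x (i + 1) : ℝ) ∧
      (pq x (i + 2) : ℝ) ≤ M ^ t ∧ M ≤ (pq x (i + 2) : ℝ) * pq x (i + 3)} ≤
    ENNReal.ofReal (M ^ (-(3 * t - 1 - t ^ 2) + 2 * ε)) * (W t i * (Z ε * Z ε)) := by
  have ht0 : 0 < t := one_half_pos.trans ht
  have hM0 : 0 < M := by linarith
  rw [W, Z, ← tsum_prod_mul, ← tsum_prod_mul]
  refine content_le_tsum ht0 (fun x => (vec x 0 i, dig x i, dig x (i + 1))) _ _ _ ?_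
  rintro ⟨u, a, b⟩
  rcases Set.eq_empty_or_nonempty {x | x ∈ {x | x ∈ good ∧ M ^ (1 - t) ≤ (pq x (i + 1) : ℝ) ∧
      (pq x (i + 2) : ℝ) ≤ M ^ t ∧ M ≤ (pq x (i + 2) : ℝ) * pq x (i + 3)} ∧
      (vec x 0 i, dig x i, dig x (i + 1)) = (u, a, b)} with h | ⟨x₀, ⟨hg, hs, hs', _⟩, hx₀⟩
  · rw [h]; simp
  simp only [Prod.mk.injEq] at hx₀
  rw [← dig_coe hg, hx₀.2.1] at hs
  rw [← dig_coe hg, hx₀.2.2] at hs'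
  have ha1 : (1 : ℝ) ≤ (a : ℕ) := by exact_mod_cast a.pos
  have ha0 : (0 : ℝ) < (a : ℕ) := by linarith
  have hb1 : (1 : ℝ) ≤ (b : ℕ) := by exact_mod_cast b.pos
  have hb0 : (0 : ℝ) < (b : ℕ) := by linarith
  have hpos : ∀ d ∈ wd u ++ [(a : ℕ)], 1 ≤ d := by
    intro d hd
    rcases List.mem_append.1 hd with hd | hd
    · exact wd_pos u d hd
    · rw [List.mem_singleton.1 hd]; exact a.pos
  refine (content_cyl ht0 (R := M / (b : ℕ)) (m := i + 2) (w := (wd u ++ [(a : ℕ)]) ++ [(b : ℕ)])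
    (by positivity) ?_).trans ?_
  · rintro x ⟨⟨hg, _, _, hbc⟩, hx⟩
    simp only [Prod.mk.injEq] at hx
    have hd := dig_coe hg i
    have hd' := dig_coe hg (i + 1)
    rw [hx.2.1] at hd
    rw [hx.2.2] at hd'
    refine ⟨hg, ?_, ?_⟩
    · rw [word_succ, word_succ, word_eq hg, hx.1, hd, hd']
    · rw [div_le_iff₀ hb0, mul_comm, hd']; exact hbc
  · simp only
    rw [← ENNReal.ofReal_mul (by positivity), ← ENNReal.ofReal_mul (by positivity),
      ← ENNReal.ofReal_mul (by positivity)]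
    apply ENNReal.ofReal_le_ofReal
    have h0 := rpow_append_singleton t ht0 _ b hpos b.pos
    have h1 := rpow_append_singleton t ht0 (wd u) a (wd_pos u) a.pos
    have h2 := large_digit (t := t) (ε := ε) (by positivity) hs (by linarith)
    have h3 := small_digit (t := t) (ε := ε) hb1 hs' (by linarith)
    rw [Real.div_rpow hM0.le hb0.le]
    set Q := (contQ (wd u) : ℝ) ^ (-(2 * t))
    have hQ : 0 ≤ Q := by positivity
    calc _ ≤ (Q * ((a : ℕ) : ℝ) ^ (-(2 * t))) * ((b : ℕ) : ℝ) ^ (-(2 * t)) *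
            (M ^ (-t) / ((b : ℕ) : ℝ) ^ (-t)) := by
          gcongr
          exact h0.trans (by gcongr)
      _ = Q * ((a : ℕ) : ℝ) ^ (-(2 * t)) * M ^ (-t) * ((b : ℕ) : ℝ) ^ (-t) := by
          nth_rewrite 2 [show -(2 * t) = -t + -t by ring]
          rw [Real.rpow_add hb0]
          field_simp
      _ ≤ Q * ((M ^ (1 - t)) ^ (-(2 * t - 1 - ε)) * ((a : ℕ) : ℝ) ^ (-1 - ε)) * M ^ (-t) *
            ((M ^ t) ^ (1 - t + ε) * ((b : ℕ) : ℝ) ^ (-1 - ε)) := by gcongr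
      _ = M ^ ((1 - t) * (-(2 * t - 1 - ε)) + -t + t * (1 - t + ε)) *
            (Q * (((a : ℕ) : ℝ) ^ (-1 - ε) * ((b : ℕ) : ℝ) ^ (-1 - ε))) := by
          rw [Real.rpow_add hM0, Real.rpow_add hM0, Real.rpow_mul hM0.le, Real.rpow_mul hM0.le]
          ring
      _ ≤ _ := mul_le_mul_of_nonneg_right
          (Real.rpow_le_rpow_of_exponent_le hM (by nlinarith)) (by positivity)

/-- Disjoint pairs, `c` large: keep everything before `c` and group all `c ≥ M ^ t`. -/
lemma cover_B1 {t ε M : ℝ} (ht : 1 / 2 < t) (ht1 : t < 1) (hε : 0 < ε) (hε1 : ε ≤ 2 * t - 1)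
    (hM : 1 ≤ M) (i m : ℕ) :
    content t (one_half_pos.trans ht) {x | x ∈ good ∧ M ≤ (pq x (i + 1) : ℝ) * pq x (i + 2) ∧
      M ^ t ≤ (pq x (i + 2 + m + 1) : ℝ)} ≤
    ENNReal.ofReal (M ^ (-(3 * t - 1 - t ^ 2) + 2 * ε)) * (W t i * (Z ε * (Z ε * W t m))) := by
  have ht0 : 0 < t := one_half_pos.trans ht
  have hM0 : 0 < M := by linarith
  rw [W, W, Z, ← tsum_prod_mul, ← tsum_prod_mul, ← tsum_prod_mul]
  refine content_le_tsum ht0 (fun x => (vec x 0 i, dig x i, dig x (i + 1), vec x (i + 2) m)) _ _ _ ?_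
  rintro ⟨u, a, b, v⟩
  rcases Set.eq_empty_or_nonempty {x | x ∈ {x | x ∈ good ∧ M ≤ (pq x (i + 1) : ℝ) * pq x (i + 2) ∧
      M ^ t ≤ (pq x (i + 2 + m + 1) : ℝ)} ∧
      (vec x 0 i, dig x i, dig x (i + 1), vec x (i + 2) m) = (u, a, b, v)} with
    h | ⟨x₀, ⟨hg, hs, _⟩, hx₀⟩
  · rw [h]; simp
  simp only [Prod.mk.injEq] at hx₀
  rw [← dig_coe hg, ← dig_coe hg (i + 1), hx₀.2.1, hx₀.2.2.1] at hs
  have ha1 : (1 : ℝ) ≤ (a : ℕ) := by exact_mod_cast a.pos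
  have ha0 : (0 : ℝ) < (a : ℕ) := by linarith
  have hb1 : (1 : ℝ) ≤ (b : ℕ) := by exact_mod_cast b.pos
  have hb0 : (0 : ℝ) < (b : ℕ) := by linarith
  have hpos : ∀ d ∈ wd u ++ [(a : ℕ)], 1 ≤ d := by
    intro d hd
    rcases List.mem_append.1 hd with hd | hd
    · exact wd_pos u d hd
    · rw [List.mem_singleton.1 hd]; exact a.pos
  have hpos2 : ∀ d ∈ (wd u ++ [(a : ℕ)]) ++ [(b : ℕ)], 1 ≤ d := by
    intro d hd
    rcases List.mem_append.1 hd with hd | hd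
    · exact hpos d hd
    · rw [List.mem_singleton.1 hd]; exact b.pos
  refine (content_cyl ht0 (R := M ^ t) (m := i + 2 + m)
    (w := ((wd u ++ [(a : ℕ)]) ++ [(b : ℕ)]) ++ wd v) (by positivity) ?_).trans ?_
  · rintro x ⟨⟨hg, _, hc⟩, hx⟩
    simp only [Prod.mk.injEq] at hx
    have hd := dig_coe hg i
    have hd' := dig_coe hg (i + 1)
    rw [hx.2.1] at hd
    rw [hx.2.2.1] at hd'
    refine ⟨hg, ?_, hc⟩
    rw [word_add hg, word_succ, word_succ, word_eq hg, hx.1, hd, hd', hx.2.2.2]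
  · simp only
    rw [← ENNReal.ofReal_mul (by positivity), ← ENNReal.ofReal_mul (by positivity),
      ← ENNReal.ofReal_mul (by positivity), ← ENNReal.ofReal_mul (by positivity)]
    apply ENNReal.ofReal_le_ofReal
    have hv := rpow_append t ht0 _ (wd v) hpos2 (wd_pos v)
    have h0 := rpow_append_singleton t ht0 _ b hpos b.pos
    have h1 := rpow_append_singleton t ht0 (wd u) a (wd_pos u) a.pos
    have h2 := large_digit (t := t) (ε := ε) hM0 hs (by linarith)
    rw [Real.mul_rpow ha0.le hb0.le, Real.mul_rpow ha0.le hb0.le] at h2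
    set Q := (contQ (wd u) : ℝ) ^ (-(2 * t))
    set V := (contQ (wd v) : ℝ) ^ (-(2 * t))
    have hQ : 0 ≤ Q := by positivity
    have hV : 0 ≤ V := by positivity
    calc _ ≤ ((Q * ((a : ℕ) : ℝ) ^ (-(2 * t))) * ((b : ℕ) : ℝ) ^ (-(2 * t)) * V) *
            (M ^ t) ^ (-t) := by
          gcongr
          refine hv.trans ?_
          gcongr
          exact h0.trans (by gcongr)
      _ = (((a : ℕ) : ℝ) ^ (-(2 * t)) * ((b : ℕ) : ℝ) ^ (-(2 * t))) * (Q * V * (M ^ t) ^ (-t)) := by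
          ring
      _ ≤ M ^ (-(2 * t - 1 - ε)) * (((a : ℕ) : ℝ) ^ (-1 - ε) * ((b : ℕ) : ℝ) ^ (-1 - ε)) *
            (Q * V * (M ^ t) ^ (-t)) := by gcongr
      _ = M ^ (-(2 * t - 1 - ε) + t * (-t)) *
            (Q * (((a : ℕ) : ℝ) ^ (-1 - ε) * (((b : ℕ) : ℝ) ^ (-1 - ε) * V))) := by
          rw [Real.rpow_add hM0, Real.rpow_mul hM0.le]
          ring
      _ ≤ _ := mul_le_mul_of_nonneg_right
          (Real.rpow_le_rpow_of_exponent_le hM (by nlinarith)) (by positivity)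

/-- Disjoint pairs, `c` small: keep everything up to `c` and group all `d ≥ M / c`. -/
lemma cover_B2 {t ε M : ℝ} (ht : 1 / 2 < t) (ht1 : t < 1) (hε : 0 < ε) (hε1 : ε ≤ 2 * t - 1)
    (hM : 1 ≤ M) (i m : ℕ) :
    content t (one_half_pos.trans ht) {x | x ∈ good ∧ M ≤ (pq x (i + 1) : ℝ) * pq x (i + 2) ∧
      (pq x (i + 2 + m + 1) : ℝ) ≤ M ^ t ∧
      M ≤ (pq x (i + 2 + m + 1) : ℝ) * pq x (i + 2 + m + 2)} ≤
    ENNReal.ofReal (M ^ (-(3 * t - 1 - t ^ 2) + 2 * ε)) *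
      (W t i * (Z ε * (Z ε * (W t m * Z ε)))) := by
  have ht0 : 0 < t := one_half_pos.trans ht
  have hM0 : 0 < M := by linarith
  rw [W, W, Z, ← tsum_prod_mul, ← tsum_prod_mul, ← tsum_prod_mul, ← tsum_prod_mul]
  refine content_le_tsum ht0
    (fun x => (vec x 0 i, dig x i, dig x (i + 1), vec x (i + 2) m, dig x (i + 2 + m))) _ _ _ ?_
  rintro ⟨u, a, b, v, c⟩
  rcases Set.eq_empty_or_nonempty {x | x ∈ {x | x ∈ good ∧ M ≤ (pq x (i + 1) : ℝ) * pq x (i + 2) ∧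
      (pq x (i + 2 + m + 1) : ℝ) ≤ M ^ t ∧
      M ≤ (pq x (i + 2 + m + 1) : ℝ) * pq x (i + 2 + m + 2)} ∧
      (vec x 0 i, dig x i, dig x (i + 1), vec x (i + 2) m, dig x (i + 2 + m)) =
        (u, a, b, v, c)} with
    h | ⟨x₀, ⟨hg, hs, hs', _⟩, hx₀⟩
  · rw [h]; simp
  simp only [Prod.mk.injEq] at hx₀
  rw [← dig_coe hg, ← dig_coe hg (i + 1), hx₀.2.1, hx₀.2.2.1] at hs
  rw [← dig_coe hg, hx₀.2.2.2.2] at hs'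
  have ha1 : (1 : ℝ) ≤ (a : ℕ) := by exact_mod_cast a.pos
  have ha0 : (0 : ℝ) < (a : ℕ) := by linarith
  have hb1 : (1 : ℝ) ≤ (b : ℕ) := by exact_mod_cast b.pos
  have hb0 : (0 : ℝ) < (b : ℕ) := by linarith
  have hc1 : (1 : ℝ) ≤ (c : ℕ) := by exact_mod_cast c.pos
  have hc0 : (0 : ℝ) < (c : ℕ) := by linarith
  have hpos : ∀ d ∈ wd u ++ [(a : ℕ)], 1 ≤ d := by
    intro d hd
    rcases List.mem_append.1 hd with hd | hd
    · exact wd_pos u d hd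
    · rw [List.mem_singleton.1 hd]; exact a.pos
  have hpos2 : ∀ d ∈ (wd u ++ [(a : ℕ)]) ++ [(b : ℕ)], 1 ≤ d := by
    intro d hd
    rcases List.mem_append.1 hd with hd | hd
    · exact hpos d hd
    · rw [List.mem_singleton.1 hd]; exact b.pos
  have hpos3 : ∀ d ∈ ((wd u ++ [(a : ℕ)]) ++ [(b : ℕ)]) ++ wd v, 1 ≤ d := by
    intro d hd
    rcases List.mem_append.1 hd with hd | hd
    · exact hpos2 d hd
    · exact wd_pos v d hd
  refine (content_cyl ht0 (R := M / (c : ℕ)) (m := i + 2 + m + 1)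
    (w := (((wd u ++ [(a : ℕ)]) ++ [(b : ℕ)]) ++ wd v) ++ [(c : ℕ)]) (by positivity) ?_).trans ?_
  · rintro x ⟨⟨hg, _, _, hcd⟩, hx⟩
    simp only [Prod.mk.injEq] at hx
    have hd := dig_coe hg i
    have hd' := dig_coe hg (i + 1)
    have hd'' := dig_coe hg (i + 2 + m)
    rw [hx.2.1] at hd
    rw [hx.2.2.1] at hd'
    rw [hx.2.2.2.2] at hd''
    refine ⟨hg, ?_, ?_⟩
    · rw [word_succ, word_add hg, word_succ, word_succ, word_eq hg, hx.1, hd, hd', hd'',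
        hx.2.2.2.1]
    · rw [div_le_iff₀ hc0, mul_comm, hd'']; exact hcd
  · simp only
    rw [← ENNReal.ofReal_mul (by positivity), ← ENNReal.ofReal_mul (by positivity),
      ← ENNReal.ofReal_mul (by positivity), ← ENNReal.ofReal_mul (by positivity),
      ← ENNReal.ofReal_mul (by positivity)]
    apply ENNReal.ofReal_le_ofReal
    have hc := rpow_append_singleton t ht0 _ c hpos3 c.pos
    have hv := rpow_append t ht0 _ (wd v) hpos2 (wd_pos v)
    have h0 := rpow_append_singleton t ht0 _ b hpos b.pos
    have h1 := rpow_append_singleton t ht0 (wd u) a (wd_pos u) a.pos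
    have h2 := large_digit (t := t) (ε := ε) hM0 hs (by linarith)
    have h3 := small_digit (t := t) (ε := ε) hc1 hs' (by linarith)
    rw [Real.mul_rpow ha0.le hb0.le, Real.mul_rpow ha0.le hb0.le] at h2
    rw [Real.div_rpow hM0.le hc0.le]
    set Q := (contQ (wd u) : ℝ) ^ (-(2 * t))
    set V := (contQ (wd v) : ℝ) ^ (-(2 * t))
    have hQ : 0 ≤ Q := by positivity
    have hV : 0 ≤ V := by positivity
    calc _ ≤ ((Q * ((a : ℕ) : ℝ) ^ (-(2 * t))) * ((b : ℕ) : ℝ) ^ (-(2 * t)) * V *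
            ((c : ℕ) : ℝ) ^ (-(2 * t))) * (M ^ (-t) / ((c : ℕ) : ℝ) ^ (-t)) := by
          gcongr
          refine hc.trans ?_
          gcongr
          refine hv.trans ?_
          gcongr
          exact h0.trans (by gcongr)
      _ = (((a : ℕ) : ℝ) ^ (-(2 * t)) * ((b : ℕ) : ℝ) ^ (-(2 * t))) *
            (Q * V * M ^ (-t) * ((c : ℕ) : ℝ) ^ (-t)) := by
          nth_rewrite 3 [show -(2 * t) = -t + -t by ring]
          rw [Real.rpow_add hc0]
          field_simp
      _ ≤ M ^ (-(2 * t - 1 - ε)) * (((a : ℕ) : ℝ) ^ (-1 - ε) * ((b : ℕ) : ℝ) ^ (-1 - ε)) *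
            (Q * V * M ^ (-t) * ((M ^ t) ^ (1 - t + ε) * ((c : ℕ) : ℝ) ^ (-1 - ε))) := by gcongr
      _ = M ^ (-(2 * t - 1 - ε) + -t + t * (1 - t + ε)) *
            (Q * (((a : ℕ) : ℝ) ^ (-1 - ε) * (((b : ℕ) : ℝ) ^ (-1 - ε) *
              (V * ((c : ℕ) : ℝ) ^ (-1 - ε))))) := by
          rw [Real.rpow_add hM0, Real.rpow_add hM0, Real.rpow_mul hM0.le]
          ring
      _ ≤ _ := mul_le_mul_of_nonneg_right
          (Real.rpow_le_rpow_of_exponent_le hM (by nlinarith)) (by positivity)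

/-! ### Growth of the word sums -/

lemma wd_snoc {m : ℕ} (u : Fin m → ℕ+) (a : ℕ+) :
    wd (Fin.snoc u a : Fin (m + 1) → ℕ+) = wd u ++ [(a : ℕ)] := by
  unfold wd
  rw [List.ofFn_succ', List.concat_eq_append]
  simp

lemma tsum_words_succ {m : ℕ} (F : List ℕ → ℝ≥0∞) :
    ∑' u : Fin (m + 1) → ℕ+, F (wd u) =
      ∑' u : Fin m → ℕ+, ∑' a : ℕ+, F (wd u ++ [(a : ℕ)]) := by
  rw [← (Fin.snocEquiv fun _ => ℕ+).tsum_eq, ENNReal.tsum_comm, ← ENNReal.tsum_prod]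
  refine tsum_congr fun p => ?_
  rw [← wd_snoc]
  rfl

lemma presSum_eq (B s : ℝ) (hB : 0 < B) (m : ℕ) :
    presSum B s m = ENNReal.ofReal (B ^ (-(m : ℝ) * (3 * s - 1 - s ^ 2))) * W s m := by
  unfold presSum W
  rw [← ENNReal.tsum_mul_left]
  refine tsum_congr fun u => ?_
  rw [← ENNReal.ofReal_mul (by positivity)]
  rfl

/-- Appending the letter `1` at most doubles a continuant. -/
lemma W_le_succ {s : ℝ} (h0 : 0 ≤ s) (h1 : s ≤ 1) (m : ℕ) : W s m ≤ 4 * W s (m + 1) := by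
  unfold W
  rw [tsum_words_succ fun l => ENNReal.ofReal ((contQ l : ℝ) ^ (-(2 * s))),
    ← ENNReal.tsum_mul_left]
  refine ENNReal.tsum_le_tsum fun u => ?_
  refine le_trans ?_ (mul_le_mul_right (ENNReal.le_tsum (1 : ℕ+)) 4)
  have hq : (1 : ℝ) ≤ contQ (wd u) := by exact_mod_cast contQ_pos _ (wd_pos u)
  have hq' : (contQ (wd u ++ [1]) : ℝ) ≤ 2 * contQ (wd u) := by
    exact_mod_cast contQ_snoc_one _ (wd_pos u)
  have hq1 : (1 : ℝ) ≤ contQ (wd u ++ [1]) := by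
    have := contQ_pos (wd u ++ [1]) (by
      intro a ha
      rcases List.mem_append.1 ha with h | h
      · exact wd_pos u a h
      · exact (List.mem_singleton.1 h).ge)
    exact_mod_cast this
  rw [show (4 : ℝ≥0∞) = ENNReal.ofReal 4 by simp, ← ENNReal.ofReal_mul (by norm_num)]
  apply ENNReal.ofReal_le_ofReal
  have e1 : (2 * (contQ (wd u) : ℝ)) ^ (-(2 * s)) ≤ (contQ (wd u ++ [1]) : ℝ) ^ (-(2 * s)) :=
    Real.rpow_le_rpow_of_nonpos (by linarith) hq' (by linarith)
  rw [Real.mul_rpow (by norm_num) (by linarith)] at e1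
  have e2 : (1 : ℝ) ≤ 4 * 2 ^ (-(2 * s)) := by
    have : (2 : ℝ) ^ (-2 : ℝ) ≤ 2 ^ (-(2 * s)) :=
      Real.rpow_le_rpow_of_exponent_le (by norm_num) (by linarith)
    have h4 : (2 : ℝ) ^ (-2 : ℝ) = 1 / 4 := by
      rw [Real.rpow_neg (by norm_num)]; norm_num
    rw [h4] at this
    linarith
  calc (contQ (wd u) : ℝ) ^ (-(2 * s))
      ≤ (4 * 2 ^ (-(2 * s))) * (contQ (wd u) : ℝ) ^ (-(2 * s)) :=
        le_mul_of_one_le_left (by positivity) e2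
    _ ≤ _ := by
        rw [mul_assoc]
        exact mul_le_mul_of_nonneg_left e1 (by norm_num)

lemma W_le_add {s : ℝ} (h0 : 0 ≤ s) (h1 : s ≤ 1) (m j : ℕ) : W s m ≤ 4 ^ j * W s (m + j) := by
  induction j with
  | zero => simp
  | succ j ih =>
    refine ih.trans ?_
    rw [pow_succ, mul_assoc, ← add_assoc]
    exact mul_le_mul_right (W_le_succ h0 h1 _) _

lemma W_anti {s t : ℝ} (h : s ≤ t) (m : ℕ) : W t m ≤ W s m := by
  refine ENNReal.tsum_le_tsum fun u => ENNReal.ofReal_le_ofReal ?_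
  have hq : (1 : ℝ) ≤ contQ (wd u) := by exact_mod_cast contQ_pos _ (wd_pos u)
  exact Real.rpow_le_rpow_of_exponent_le hq (by linarith)

/-- `W s 1` is the series `∑ a ^ (-2s)`. -/
lemma half_lt_of_W {s : ℝ} (h : W s 1 ≠ ⊤) : 1 / 2 < s := by
  unfold W at h
  rw [tsum_words_succ fun l => ENNReal.ofReal ((contQ l : ℝ) ^ (-(2 * s)))] at h
  have h2 := ne_top_of_le_ne_top h (ENNReal.le_tsum (default : Fin 0 → ℕ+))
  have hs := ENNReal.summable_toReal h2
  have hs' : Summable fun a : ℕ+ => ((a : ℕ) : ℝ) ^ (-(2 * s)) := by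
    refine hs.congr fun a => ?_
    rw [ENNReal.toReal_ofReal (by positivity)]
    simp [wd, contQ_singleton]
  have := (summable_pnat_iff_summable_nat (f := fun n : ℕ => (n : ℝ) ^ (-(2 * s)))).1 hs'
  rw [Real.summable_nat_rpow] at this
  linarith

/-- Nonpositive pressure means subexponential growth of `presSum`. -/
lemma presSum_le_of_pressure {B s : ℝ} (h : pressure B s ≤ 0) {δ : ℝ} (hδ : 0 < δ) :
    ∃ N : ℕ, 1 ≤ N ∧ ∀ n, N ≤ n → presSum B s n ≤ ENNReal.ofReal (Real.exp δ) ^ n := by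
  have hlt : pressure B s < (δ : EReal) := h.trans_lt (by exact_mod_cast hδ)
  have hev := eventually_lt_of_limsup_lt hlt
  obtain ⟨N, hN⟩ := eventually_atTop.1 hev
  refine ⟨N + 1, by omega, fun n hn => ?_⟩
  have h1 := hN n (by omega)
  have hn0 : (0 : ℝ) < n := by exact_mod_cast (by omega : 0 < n)
  rw [← ENNReal.log_rpow, show (δ : EReal) = ENNReal.log (ENNReal.ofReal (Real.exp δ)) by
    rw [ENNReal.log_ofReal_of_pos (Real.exp_pos _), Real.log_exp], ENNReal.log_lt_log_iff] at h1
  have := (ENNReal.rpow_inv_le_iff hn0).1 h1.le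
  rwa [ENNReal.rpow_natCast] at this

/-- The cylinders of order `m + 1` inside one of order `m` have total length at most its length. -/
lemma tsum_cyl_le (q q' : ℕ) (hq : 1 ≤ q) :
    ∑' a : ℕ+, ENNReal.ofReal (1 / (((a : ℕ) * q + q') * ((a : ℕ) * q + q' + q))) ≤
      ENNReal.ofReal (1 / ((q : ℝ) * (q + q'))) := by
  have hq0 : (0 : ℝ) < q := by exact_mod_cast hq
  rw [tsum_pnat_eq_tsum_succ
    (f := fun a : ℕ => ENNReal.ofReal (1 / (((a : ℝ) * q + q') * ((a : ℝ) * q + q' + q))))]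
  refine ENNReal.tsum_le_of_sum_range_le fun N => ?_
  rw [← ENNReal.ofReal_sum_of_nonneg (fun i _ => by positivity)]
  apply ENNReal.ofReal_le_ofReal
  have : ∑ i ∈ Finset.range N,
      1 / ((((i + 1 : ℕ) : ℝ) * q + q') * (((i + 1 : ℕ) : ℝ) * q + q' + q)) =
      1 / ((q : ℝ) * (q + q')) - 1 / (q * ((N + 1) * q + q')) := by
    induction N with
    | zero => simp
    | succ N ih =>
      rw [Finset.sum_range_succ, ih]
      push_cast
      have h1 : ((N : ℝ) + 1) * q + q' ≠ 0 := by positivity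
      have h2 : ((N : ℝ) + 1) * q + q' + q ≠ 0 := by positivity
      have h3 : ((N : ℝ) + 1 + 1) * q + q' = ((N : ℝ) + 1) * q + q' + q := by ring
      rw [h3]
      field_simp
      ring
  rw [this]
  have : (0 : ℝ) ≤ 1 / (q * ((N + 1) * q + q')) := by positivity
  linarith

lemma W_one_le (m : ℕ) : W 1 m ≤ 2 := by
  -- `1 / (q (q + q'))` is the length of a cylinder; these lengths add up to at most `1`.
  have hV : ∀ m : ℕ, ∑' u : Fin m → ℕ+, ENNReal.ofReal
      (1 / (((cq (wd u)).1 : ℝ) * ((cq (wd u)).1 + (cq (wd u)).2))) ≤ 1 := by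
    intro m
    induction m with
    | zero => simp [wd, cq]
    | succ m ih =>
      rw [tsum_words_succ fun l => ENNReal.ofReal
        (1 / (((cq l).1 : ℝ) * ((cq l).1 + (cq l).2)))]
      refine le_trans (ENNReal.tsum_le_tsum fun u => ?_) ih
      refine le_trans (le_of_eq ?_) (tsum_cyl_le (cq (wd u)).1 (cq (wd u)).2
        (cq_bounds _ (wd_pos u)).1)
      refine tsum_congr fun a => ?_
      rw [cq_snoc]
      push_cast
      rfl
  calc W 1 m
      ≤ ∑' u : Fin m → ℕ+, 2 * ENNReal.ofReal
          (1 / (((cq (wd u)).1 : ℝ) * ((cq (wd u)).1 + (cq (wd u)).2))) := by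
        refine ENNReal.tsum_le_tsum fun u => ?_
        rw [show (2 : ℝ≥0∞) = ENNReal.ofReal 2 by simp, ← ENNReal.ofReal_mul (by norm_num)]
        apply ENNReal.ofReal_le_ofReal
        obtain ⟨h1, h2⟩ := cq_bounds _ (wd_pos u)
        rw [contQ_eq]
        have h1' : (1 : ℝ) ≤ (cq (wd u)).1 := by exact_mod_cast h1
        have h2' : ((cq (wd u)).2 : ℝ) ≤ (cq (wd u)).1 := by exact_mod_cast h2
        have h3' : (0 : ℝ) ≤ (cq (wd u)).2 := by positivity
        rw [Real.rpow_neg (by positivity), mul_one, Real.rpow_two, mul_one_div,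
          inv_eq_one_div, div_le_div_iff₀ (by positivity) (by positivity)]
        nlinarith
    _ = 2 * _ := ENNReal.tsum_mul_left
    _ ≤ 2 * 1 := mul_le_mul_right (hV m) 2
    _ = 2 := mul_one 2

/-- At `s = 1` the exponent `3s - 1 - s²` is `1`, so `presSum B 1 n ≤ 2 B⁻ⁿ`. In particular the set
whose infimum is `sB B` is nonempty. -/
lemma pressure_one_le {B : ℝ} (hB : 1 < B) : pressure B 1 ≤ 0 := by
  have hB0 : 0 < B := by linarith
  have hlim : Tendsto (fun n : ℕ => (B⁻¹) ^ n * 2) atTop (nhds 0) := by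
    have := (tendsto_pow_atTop_nhds_zero_of_lt_one (r := B⁻¹) (by positivity)
      (inv_lt_one_of_one_lt₀ hB)).mul_const 2
    simpa using this
  unfold pressure
  refine limsup_le_of_le (h := ?_)
  filter_upwards [hlim.eventually_le_const zero_lt_one] with n hn
  rw [← ENNReal.log_rpow, ENNReal.log_le_zero_iff]
  refine ENNReal.rpow_le_one ?_ (by positivity)
  rw [presSum_eq B 1 hB0]
  refine (mul_le_mul_right (W_one_le n) _).trans ?_
  rw [show (2 : ℝ≥0∞) = ENNReal.ofReal 2 by simp, ← ENNReal.ofReal_mul (by positivity),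
    ← ENNReal.ofReal_one]
  apply ENNReal.ofReal_le_ofReal
  refine le_trans (le_of_eq ?_) hn
  rw [show -(n : ℝ) * (3 * 1 - 1 - 1 ^ 2) = -(n : ℝ) by ring, Real.rpow_neg hB0.le,
    Real.rpow_natCast, inv_pow]

/-! ### Assembling the covers -/

/-- The set where both products are at least `M`, at the positions `i < j` (counted from zero).
The five covers apply: overlapping pairs are the case `j = i + 1`, disjoint pairs `j = i + 2 + m`,
with `m` the number of digits strictly between the two pairs. -/
lemma pair_bound {t ε M : ℝ} (ht : 1 / 2 < t) (ht1 : t < 1) (hε : 0 < ε) (hε1 : ε ≤ 2 * t - 1)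
    (hM : 1 ≤ M) {K L : ℝ≥0∞} (hL : 1 ≤ L) (hW : ∀ m, W t m ≤ K * L ^ m) {i j n : ℕ}
    (hij : i < j) (hj : j < n) :
    content t (one_half_pos.trans ht) {x | x ∈ good ∧ M ≤ (pq x (i + 1) : ℝ) * pq x (i + 2) ∧
      M ≤ (pq x (j + 1) : ℝ) * pq x (j + 2)} ≤
    ENNReal.ofReal (M ^ (-(3 * t - 1 - t ^ 2) + 2 * ε)) *
      ((2 * K * Z ε + K * Z ε ^ 2 + K ^ 2 * Z ε ^ 2 + K ^ 2 * Z ε ^ 3) * L ^ n) := by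
  set D := ENNReal.ofReal (M ^ (-(3 * t - 1 - t ^ 2) + 2 * ε))
  set κ := content t (one_half_pos.trans ht)
  set z := Z ε
  have hLp : ∀ m, m ≤ n → L ^ m ≤ L ^ n := fun m hm => pow_le_pow_right₀ hL hm
  have hWn : W t i ≤ K * L ^ n := (hW i).trans (mul_le_mul_right (hLp i (by omega)) _)
  obtain ⟨m, rfl | rfl⟩ : ∃ m, j = i + 1 ∨ j = i + 2 + m := by
    by_cases h : j = i + 1
    · exact ⟨0, Or.inl h⟩
    · exact ⟨j - (i + 2), Or.inr (by omega)⟩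
  · have hsub : {x | x ∈ good ∧ M ≤ (pq x (i + 1) : ℝ) * pq x (i + 2) ∧
        M ≤ (pq x (i + 1 + 1) : ℝ) * pq x (i + 1 + 2)} ⊆
        ({x | x ∈ good ∧ M ≤ (pq x (i + 1) : ℝ) * pq x (i + 2) ∧
          (pq x (i + 1) : ℝ) ≤ M ^ (1 - t)} ∪
        {x | x ∈ good ∧ M ^ (1 - t) ≤ (pq x (i + 1) : ℝ) ∧ M ^ t ≤ (pq x (i + 2) : ℝ)}) ∪
        {x | x ∈ good ∧ M ^ (1 - t) ≤ (pq x (i + 1) : ℝ) ∧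
          (pq x (i + 2) : ℝ) ≤ M ^ t ∧ M ≤ (pq x (i + 2) : ℝ) * pq x (i + 3)} := by
      rintro x ⟨hg, h1, h2⟩
      rcases le_total (pq x (i + 1) : ℝ) (M ^ (1 - t)) with h | h
      · exact Or.inl (Or.inl ⟨hg, h1, h⟩)
      · rcases le_total (M ^ t) (pq x (i + 2) : ℝ) with h' | h'
        · exact Or.inl (Or.inr ⟨hg, h, h'⟩)
        · exact Or.inr ⟨hg, h, h', h2⟩
    refine (measure_mono hsub).trans ((measure_union_le _ _).trans
      ((add_le_add_left (measure_union_le _ _) _).trans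
      ((add_le_add (add_le_add (cover_A1 ht ht1 hε hM i) (cover_A2 ht ht1 hε hε1 hM i))
        (cover_A3 ht ht1 hε hε1 hM i)).trans ?_)))
    rw [← mul_add, ← mul_add]
    refine mul_le_mul_right ?_ D
    calc W t i * z + W t i * z + W t i * (z * z)
        ≤ K * L ^ n * z + K * L ^ n * z + K * L ^ n * (z * z) := by gcongr
      _ = (2 * K * z + K * z ^ 2) * L ^ n := by ring
      _ ≤ _ := by
        refine mul_le_mul_left ?_ _
        rw [add_assoc]
        exact le_self_add
  · have hsub : {x | x ∈ good ∧ M ≤ (pq x (i + 1) : ℝ) * pq x (i + 2) ∧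
        M ≤ (pq x (i + 2 + m + 1) : ℝ) * pq x (i + 2 + m + 2)} ⊆
        {x | x ∈ good ∧ M ≤ (pq x (i + 1) : ℝ) * pq x (i + 2) ∧
          M ^ t ≤ (pq x (i + 2 + m + 1) : ℝ)} ∪
        {x | x ∈ good ∧ M ≤ (pq x (i + 1) : ℝ) * pq x (i + 2) ∧
          (pq x (i + 2 + m + 1) : ℝ) ≤ M ^ t ∧
          M ≤ (pq x (i + 2 + m + 1) : ℝ) * pq x (i + 2 + m + 2)} := by
      rintro x ⟨hg, h1, h2⟩
      rcases le_total (M ^ t) (pq x (i + 2 + m + 1) : ℝ) with h | h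
      · exact Or.inl ⟨hg, h1, h⟩
      · exact Or.inr ⟨hg, h1, h, h2⟩
    have hWW : W t i * W t m ≤ K ^ 2 * L ^ n :=
      calc W t i * W t m ≤ (K * L ^ i) * (K * L ^ m) := mul_le_mul' (hW i) (hW m)
        _ = K ^ 2 * L ^ (i + m) := by ring
        _ ≤ K ^ 2 * L ^ n := mul_le_mul_right (hLp _ (by omega)) _
    refine (measure_mono hsub).trans ((measure_union_le _ _).trans
      ((add_le_add (cover_B1 ht ht1 hε hε1 hM i m) (cover_B2 ht ht1 hε hε1 hM i m)).trans ?_))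
    rw [← mul_add]
    refine mul_le_mul_right ?_ D
    calc W t i * (z * (z * W t m)) + W t i * (z * (z * (W t m * z)))
        = (W t i * W t m) * (z ^ 2 + z ^ 3) := by ring
      _ ≤ (K ^ 2 * L ^ n) * (z ^ 2 + z ^ 3) := mul_le_mul_left hWW _
      _ = (K ^ 2 * z ^ 2 + K ^ 2 * z ^ 3) * L ^ n := by ring
      _ ≤ _ := by
        refine mul_le_mul_left ?_ _
        rw [add_assoc _ (K ^ 2 * z ^ 2)]
        exact le_add_self

/-- The Borel–Cantelli step: the `n²` choices of positions contribute `O(n² rⁿ)` at stage `n`,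
with `r = B ^ (-(3t - 1 - t²) + 2ε) * l < 1`. -/
lemma content_F2 {B t ε l : ℝ} (hB : 1 < B) (ht : 1 / 2 < t) (ht1 : t < 1) (hε : 0 < ε)
    (hε1 : ε ≤ 2 * t - 1) {K : ℝ≥0∞} (hK : K ≠ ⊤) (hl : 1 ≤ l)
    (hW : ∀ m, W t m ≤ K * ENNReal.ofReal l ^ m)
    (hr : B ^ (-(3 * t - 1 - t ^ 2) + 2 * ε) * l < 1) :
    content t (one_half_pos.trans ht) (F2 fun n : ℕ => B ^ n) = 0 := by
  have hB0 : 0 < B := by linarith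
  set κ := content t (one_half_pos.trans ht)
  set e := -(3 * t - 1 - t ^ 2) + 2 * ε with he
  set C := 2 * K * Z ε + K * Z ε ^ 2 + K ^ 2 * Z ε ^ 2 + K ^ 2 * Z ε ^ 3 with hC
  have hCtop : C ≠ ⊤ := by
    have := Z_ne_top hε
    rw [hC]
    finiteness
  set r := B ^ e * l with hrdef
  have hr0 : 0 ≤ r := by positivity
  let S : ℕ → ℕ → ℕ → Set ℝ := fun n i j =>
    {x | i < j ∧ x ∈ good ∧ B ^ n ≤ (pq x (i + 1) : ℝ) * pq x (i + 2) ∧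
      B ^ n ≤ (pq x (j + 1) : ℝ) * pq x (j + 2)}
  have hS : ∀ n i j, j < n → κ (S n i j) ≤ C * ENNReal.ofReal (r ^ n) := by
    intro n i j hj
    by_cases hij : i < j
    · have hb := pair_bound ht ht1 hε hε1 (one_le_pow₀ hB.le : 1 ≤ B ^ n)
        (ENNReal.one_le_ofReal.2 hl) hW hij hj
      refine (measure_mono fun x hx => hx.2).trans (hb.trans (le_of_eq ?_))
      rw [← he, ← hC, ← ENNReal.ofReal_pow (by linarith), mul_left_comm,
        ← ENNReal.ofReal_mul (by positivity)]
      congr 2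
      rw [hrdef, mul_pow, ← Real.rpow_natCast B n, ← Real.rpow_mul hB0.le, mul_comm (n : ℝ) e,
        Real.rpow_mul hB0.le, Real.rpow_natCast]
    · have : S n i j = ∅ := by
        ext x
        simp [S, hij]
      rw [this]
      simp
  have hp : ∀ n, κ {x | ∃ i ∈ Finset.range n, ∃ j ∈ Finset.range n, x ∈ S n i j} ≤
      C * ENNReal.ofReal ((n : ℝ) ^ 2 * r ^ n) := by
    intro n
    have hU : {x | ∃ i ∈ Finset.range n, ∃ j ∈ Finset.range n, x ∈ S n i j} =
        ⋃ i ∈ Finset.range n, ⋃ j ∈ Finset.range n, S n i j := by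
      ext x
      simp
    rw [hU]
    calc _ ≤ ∑ i ∈ Finset.range n, κ (⋃ j ∈ Finset.range n, S n i j) :=
          measure_biUnion_finset_le _ _
      _ ≤ ∑ i ∈ Finset.range n, ∑ j ∈ Finset.range n, κ (S n i j) :=
          Finset.sum_le_sum fun i _ => measure_biUnion_finset_le _ _
      _ ≤ ∑ i ∈ Finset.range n, ∑ j ∈ Finset.range n, C * ENNReal.ofReal (r ^ n) :=
          Finset.sum_le_sum fun i _ => Finset.sum_le_sum fun j hj =>
            hS n i j (Finset.mem_range.1 hj)
      _ = _ := by
          simp only [Finset.sum_const, Finset.card_range, nsmul_eq_mul]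
          rw [ENNReal.ofReal_mul (by positivity), ENNReal.ofReal_pow (Nat.cast_nonneg n),
            ENNReal.ofReal_natCast]
          ring
  have hsum : ∑' n, κ {x | ∃ i ∈ Finset.range n, ∃ j ∈ Finset.range n, x ∈ S n i j} ≠ ⊤ := by
    refine ne_top_of_le_ne_top ?_ (ENNReal.tsum_le_tsum hp)
    rw [ENNReal.tsum_mul_left]
    refine ENNReal.mul_ne_top hCtop (Summable.tsum_ofReal_ne_top ?_)
    exact summable_pow_mul_geometric_of_norm_lt_one 2
      (by rw [Real.norm_of_nonneg hr0]; exact hr)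
  refine measure_mono_null ?_ (measure_setOfPred_frequently_eq_zero hsum)
  rintro x ⟨hx, hirr, hinf⟩
  refine (Nat.frequently_atTop_iff_infinite.2 hinf).mono ?_
  rintro n ⟨k, k', hk1, hkn, hk1', hkn', hne, h1, h2⟩
  obtain ⟨i, rfl⟩ : ∃ i, k = i + 1 := ⟨k - 1, by omega⟩
  obtain ⟨j, rfl⟩ : ∃ j, k' = j + 1 := ⟨k' - 1, by omega⟩
  rcases lt_or_gt_of_ne hne with h | h
  · exact ⟨i, Finset.mem_range.2 (by omega), j, Finset.mem_range.2 (by omega),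
      by omega, ⟨hx, hirr⟩, h1, h2⟩
  · exact ⟨j, Finset.mem_range.2 (by omega), i, Finset.mem_range.2 (by omega),
      by omega, ⟨hx, hirr⟩, h2, h1⟩

/-- The exponent `3s - 1 - s²` is strictly increasing on `[0, 1]`, so passing from `s` to `t > s`
gains `Δ > 0`; a quarter of it absorbs the error in the pressure and a half the loss `2ε`. -/
lemma dimH_le_of_pressure {B s t : ℝ} (hB : 1 < B) (hs0 : 0 ≤ s) (hp : pressure B s ≤ 0)
    (hst : s < t) (ht1 : t < 1) :
    dimH (F2 fun n : ℕ => B ^ n) ≤ ENNReal.ofReal t := by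
  have hB0 : 0 < B := by linarith
  have hlog : 0 < Real.log B := Real.log_pos hB
  set g := 3 * s - 1 - s ^ 2 with hg
  set Δ := (3 * t - 1 - t ^ 2) - g with hΔ
  have hΔ0 : 0 < Δ := by rw [hΔ, hg]; nlinarith
  obtain ⟨N, hN1, hN⟩ := presSum_le_of_pressure hp (δ := Δ / 4 * Real.log B) (by positivity)
  have hexp : Real.exp (Δ / 4 * Real.log B) = B ^ (Δ / 4) := by
    rw [Real.rpow_def_of_pos hB0, mul_comm]
  rw [hexp] at hN
  set l := B ^ (g + Δ / 4) with hl
  have hl0 : 0 < l := by positivity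
  have hWs : ∀ n, N ≤ n → W s n ≤ ENNReal.ofReal l ^ n := by
    intro n hn
    have h := hN n hn
    rw [presSum_eq B s hB0, ← hg] at h
    have hB1 : ENNReal.ofReal (B ^ ((n : ℝ) * g)) * ENNReal.ofReal (B ^ (-(n : ℝ) * g)) = 1 := by
      rw [← ENNReal.ofReal_mul (by positivity), ← Real.rpow_add hB0]
      simp
    calc W s n = ENNReal.ofReal (B ^ ((n : ℝ) * g)) *
          (ENNReal.ofReal (B ^ (-(n : ℝ) * g)) * W s n) := by rw [← mul_assoc, hB1, one_mul]
      _ ≤ ENNReal.ofReal (B ^ ((n : ℝ) * g)) * ENNReal.ofReal (B ^ (Δ / 4)) ^ n :=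
          mul_le_mul_right h _
      _ = _ := by
          rw [← ENNReal.ofReal_pow (by positivity), ← ENNReal.ofReal_pow (by positivity),
            ← ENNReal.ofReal_mul (by positivity), hl, Real.rpow_add hB0, mul_pow,
            ← Real.rpow_natCast (B ^ g), ← Real.rpow_mul hB0.le, mul_comm g]
  have hWall : ∀ m, W s m ≤ (4 ^ N * ENNReal.ofReal l ^ N) * ENNReal.ofReal l ^ m := by
    intro m
    refine (W_le_add hs0 (by linarith) m N).trans ?_
    refine (mul_le_mul_right (hWs (m + N) (by omega)) _).trans (le_of_eq ?_)
    ring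
  have hs : 1 / 2 < s := half_lt_of_W
    (ne_top_of_le_ne_top (by finiteness) (hWall 1))
  have ht : 1 / 2 < t := hs.trans hst
  have hl1 : 1 ≤ l := Real.one_le_rpow hB.le (by
    have : 0 < g := by rw [hg]; nlinarith
    linarith)
  obtain ⟨ε, hε, hε1, hε2⟩ : ∃ ε : ℝ, 0 < ε ∧ ε ≤ 2 * t - 1 ∧ ε ≤ Δ / 4 :=
    ⟨min (2 * t - 1) (Δ / 4), lt_min (by linarith) (by positivity), min_le_left _ _,
      min_le_right _ _⟩
  have hc := content_F2 (K := 4 ^ N * ENNReal.ofReal l ^ N) hB ht ht1 hε hε1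
    (by finiteness) hl1 (fun m => (W_anti hst.le m).trans (hWall m))
    (by
      rw [hl, ← Real.rpow_add hB0]
      exact Real.rpow_lt_one_of_one_lt_of_neg hB (by linarith))
  have hH := hausdorffMeasure_eq_zero_of_content _ hc
  have hcoe : ((t.toNNReal : NNReal) : ℝ) = t := Real.coe_toNNReal t (by linarith)
  have := dimH_le_of_hausdorffMeasure_ne_top (d := t.toNNReal)
    (s := F2 fun n : ℕ => B ^ n) (by rw [hcoe, hH]; simp)
  exact this

theorem dimH_F2_le_sB (B : ℝ) (hB : 1 < B) :
    dimH (F2 fun n : ℕ => B ^ n) ≤ ENNReal.ofReal (sB B) := by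
  have hdim : dimH (F2 fun n : ℕ => B ^ n) ≤ 1 :=
    (dimH_mono (Set.subset_univ _)).trans Real.dimH_univ.le
  have htop : dimH (F2 fun n : ℕ => B ^ n) ≠ ⊤ := ne_top_of_le_ne_top ENNReal.one_ne_top hdim
  refine ENNReal.le_ofReal_iff_toReal_le htop
    (Real.sInf_nonneg fun s hs => hs.1) |>.2 ?_
  refine le_csInf ⟨1, zero_le_one, pressure_one_le hB⟩ ?_
  rintro s ⟨hs0, hp⟩
  rcases le_or_gt 1 s with h | h
  · exact (ENNReal.toReal_mono ENNReal.one_ne_top hdim).trans (by simpa using h)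
  · refine le_of_forall_gt_imp_ge_of_dense fun t ht => ?_
    rcases lt_or_ge t 1 with h1 | h1
    · exact ENNReal.toReal_le_of_le_ofReal (by linarith) (dimH_le_of_pressure hB hs0 hp ht h1)
    · exact (ENNReal.toReal_mono ENNReal.one_ne_top hdim).trans (by simpa using h1)
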